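/- arXiv:1804.07213 — 2 statements merged into one kernel-verified Lean document; each statement's English description precedes it below -/
import Mathlib

section
/- Suppose F(x) = f(x) + P₁(x) − P₂(x) is level-bounded and the function E(x, y, w) = f(x) + P₁(x) − ⟨x, y⟩ + P₂*(y) + (L/2)‖x − w‖² is a KL function with exponent 1/2. Let {x^k} and {ξ^k} be the sequences generated by pDCA_e for minimizing F and let ζ = lim_{k→∞} E(x^k, ξ^k, x^{k−1}). Then the sequence {E(x^{k+1}, ξ^{k+1}, x^k)} converges R-linearly to ζ, and {x^k} converges R-linearly to a stationary point of F; in particular, for all sufficiently large k, E(x^{k+1}, ξ^{k+1}, x^k) − ζ ≤ C·(E(x^{k−1}, ξ^{k−1}, x^{k−2}) − E(x^{k+1}, ξ^{k+1}, x^k)) for some constant C > 0. -/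
open Filter Topology Set Metric Bornology
open scoped RealInnerProductSpace

noncomputable section

abbrev Eucl (n : ℕ) := EuclideanSpace ℝ (Fin n)

variable {H : Type*} [NormedAddCommGroup H] [InnerProductSpace ℝ H]

/-- Fréchet (regular) subgradient of an extended-real-valued function. -/
def FrechetSubgradAt (h : H → EReal) (v x : H) : Prop :=
  ∀ ε : ℝ, 0 < ε →
    ∀ᶠ y in 𝓝[≠] x, h x + ((⟪v, y - x⟫ - ε * ‖y - x‖ : ℝ) : EReal) ≤ h y

/-- Limiting (Mordukhovich) subdifferential. -/
def limSubdiff (h : H → EReal) (x : H) : Set H :=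
  {v | ∃ xs vs : ℕ → H,
    Tendsto xs atTop (𝓝 x) ∧
    Tendsto (fun k => h (xs k)) atTop (𝓝 (h x)) ∧
    Tendsto vs atTop (𝓝 v) ∧
    ∀ k, FrechetSubgradAt h (vs k) (xs k)}

/-- Convex subgradient of a real-valued function. -/
def ConvexSubgradAt (g : H → ℝ) (v x : H) : Prop :=
  ∀ y, g x + ⟪v, y - x⟫ ≤ g y

/-- Convex subgradient of an extended-real-valued function. -/
def ConvexSubgradAtE (g : H → EReal) (v x : H) : Prop :=
  ∀ y, g x + ((⟪v, y - x⟫ : ℝ) : EReal) ≤ g y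

/-- Convex conjugate of a real-valued function. -/
def conjE (g : H → ℝ) (y : H) : EReal :=
  ⨆ x : H, ((⟪x, y⟫ - g x : ℝ) : EReal)

/-- `P` is proper, closed (lsc) and convex. -/
def ProperClosedConvexE (P : H → EReal) : Prop :=
  (∀ x, P x ≠ ⊥) ∧ (∃ x, P x ≠ ⊤) ∧ LowerSemicontinuous P ∧
  (∀ x y : H, ∀ t : ℝ, t ∈ Ioo (0:ℝ) 1 →
    P (t • x + (1 - t) • y) ≤ (t : EReal) * P x + ((1 - t : ℝ) : EReal) * P y)

/-- KL property with exponent `α` at a point. -/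
def KLExpAt (h : H → EReal) (α : ℝ) (x₀ : H) : Prop :=
  ∃ c > (0:ℝ), ∃ ε > (0:ℝ), ∃ a > (0:ℝ), ∀ x : H,
    ‖x - x₀‖ ≤ ε → h x₀ < h x → h x < h x₀ + (a : EReal) →
    (limSubdiff h x).Nonempty →
    1 ≤ c * (1 - α) * ((h x).toReal - (h x₀).toReal) ^ (-α) * infDist 0 (limSubdiff h x)

/-- KL function with exponent `α`. -/
def IsKLWithExp (h : H → EReal) (α : ℝ) : Prop :=
  ∀ x₀ : H, (limSubdiff h x₀).Nonempty → KLExpAt h α x₀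

/-- KL property (general desingularizing function) at a point. -/
def KLAt (h : H → EReal) (x₀ : H) : Prop :=
  ∃ a > (0:ℝ), ∃ U ∈ 𝓝 x₀, ∃ φ φd : ℝ → ℝ,
    ContinuousOn φ (Ico 0 a) ∧ ConcaveOn ℝ (Ico 0 a) φ ∧ φ 0 = 0 ∧
    (∀ s ∈ Ico (0:ℝ) a, 0 ≤ φ s) ∧
    (∀ s ∈ Ioo (0:ℝ) a, HasDerivAt φ (φd s) s ∧ 0 < φd s) ∧
    ∀ x ∈ U, h x₀ < h x → h x < h x₀ + (a : EReal) → (limSubdiff h x).Nonempty →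
      1 ≤ φd ((h x).toReal - (h x₀).toReal) * infDist 0 (limSubdiff h x)

/-- KL function. -/
def IsKLFun (h : H → EReal) : Prop :=
  ∀ x₀ : H, (limSubdiff h x₀).Nonempty → KLAt h x₀

/-- The potential function `E(x,y,w) = f(x) + P₁(x) - ⟨x,y⟩ + P₂*(y) + L/2 ‖x-w‖²`. -/
def potE (f : H → ℝ) (P₁ : H → EReal) (P₂ : H → ℝ) (L : ℝ) (x y w : H) : EReal :=
  ((f x : ℝ) : EReal) + P₁ x - ((⟪x, y⟫ : ℝ) : EReal) + conjE P₂ y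
    + ((L / 2 * ‖x - w‖ ^ 2 : ℝ) : EReal)

/-- The pDCAe iteration: `ξ^{k+1} ∈ ∂P₂(x^k)`, `u^k = x^k + β_k (x^k - x^{k-1})` and
`x^{k+1}` is the minimizer of `⟨∇f(u^k) - ξ^{k+1}, ·⟩ + L/2 ‖· - u^k‖² + P₁(·)`.
(`x⁻¹ = x⁰` is encoded by truncated subtraction in `ℕ`.) -/
def IsPDCAe (f' : H → H) (P₁ : H → EReal) (P₂ : H → ℝ) (L : ℝ) (β : ℕ → ℝ)
    (x ξ : ℕ → H) : Prop :=
  P₁ (x 0) ≠ ⊤ ∧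
  (∀ k : ℕ, ConvexSubgradAt P₂ (ξ (k + 1)) (x k)) ∧
  (∀ k : ℕ, ∀ z : H,
    ((⟪f' (x k + β k • (x k - x (k - 1))) - ξ (k + 1), x (k + 1)⟫
        + L / 2 * ‖x (k + 1) - (x k + β k • (x k - x (k - 1)))‖ ^ 2 : ℝ) : EReal)
      + P₁ (x (k + 1))
      ≤ ((⟪f' (x k + β k • (x k - x (k - 1))) - ξ (k + 1), z⟫
        + L / 2 * ‖z - (x k + β k • (x k - x (k - 1)))‖ ^ 2 : ℝ) : EReal) + P₁ z)

/-- Triples `(x, y, w)` with the ℓ² product inner product structure. -/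
abbrev Trip (n : ℕ) := WithLp 2 (Eucl n × WithLp 2 (Eucl n × Eucl n))

def mkTrip {n : ℕ} (a b c : Eucl n) : Trip n :=
  (WithLp.equiv 2 _).symm (a, (WithLp.equiv 2 _).symm (b, c))

/-- `potE` as a function on triples. -/
def potE3 {n : ℕ} (f : Eucl n → ℝ) (P₁ : Eucl n → EReal) (P₂ : Eucl n → ℝ) (L : ℝ)
    (p : Trip n) : EReal :=
  potE f P₁ P₂ L ((WithLp.equiv 2 _) p).1 ((WithLp.equiv 2 _) ((WithLp.equiv 2 _) p).2).1
    ((WithLp.equiv 2 _) ((WithLp.equiv 2 _) p).2).2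

/-!
Evaluated along the iteration, the potential `E` decreases at each step by at least a fixed multiple
of the squared step length, and it has a limiting subgradient whose norm is controlled by the last
two step lengths. Near a cluster point, where `E` takes the limit value `ζ`, the KL inequality with
exponent `1/2` turns the second fact into the error bound
`E - ζ ≤ c * (sum of the last two squared step lengths)`. Along every ultrafilter on `ℕ` the bounded
iterates converge, so the error bound holds eventually on each ultrafilter, with a constant that
depends on it; a compactness argument makes the constant uniform. Telescoping the descent then
gives the two-step contraction of `E - ζ`. Hence `E - ζ` decays R-linearly, the step lengths, being
dominated by its square root, do so too, and the iterates converge R-linearly; passing to the limit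
in the optimality conditions of the subproblems shows that their limit is stationary.
-/

/-! ### Gradients and subgradients -/

section Gradient

variable [CompleteSpace H] {f : H → ℝ}

lemma hasDerivAt_add_smul_of_hasGradientAt {g a d : H} {t : ℝ}
    (hf : HasGradientAt f g (a + t • d)) :
    HasDerivAt (fun s : ℝ => f (a + s • d)) ⟪g, d⟫ t := by
  have hline : HasDerivAt (fun s : ℝ => a + s • d) d t := by
    simpa using ((hasDerivAt_id t).smul_const d).const_add a
  exact (hf.hasFDerivAt.comp_hasDerivAt t hline).congr_deriv
    (InnerProductSpace.toDual_apply_apply ..)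

lemma convexSubgradAt_of_hasGradientAt {g a : H} (hconv : ConvexOn ℝ univ f)
    (hf : HasGradientAt f g a) : ConvexSubgradAt f g a := by
  intro b
  have hline : ConvexOn ℝ univ (fun s : ℝ => f (a + s • (b - a))) := by
    refine (hconv.comp_affineMap (AffineMap.lineMap a b : ℝ →ᵃ[ℝ] H)).congr fun s _ => ?_
    simp [AffineMap.lineMap_apply, add_comm]
  have hslope := hline.le_slope_of_hasDerivAt (mem_univ 0) (mem_univ 1) one_pos
    (hasDerivAt_add_smul_of_hasGradientAt (d := b - a) (by simpa using hf))
  simp only [slope_def_field, one_smul, zero_smul, add_zero, sub_zero, div_one,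
    add_sub_cancel] at hslope
  linarith

lemma le_add_inner_add_half_mul_norm_sq {f' : H → H} {L : ℝ} {a : H}
    (hf : ∀ y, HasGradientAt f (f' y) y) (hlip : ∀ y, ‖f' y - f' a‖ ≤ L * ‖y - a‖) (b : H) :
    f b ≤ f a + ⟪f' a, b - a⟫ + L / 2 * ‖b - a‖ ^ 2 := by
  set d := b - a with hd
  -- The gap between `f` and its quadratic model is nonincreasing along the segment from `a` to `b`.
  have hder (t : ℝ) : HasDerivAt
      (fun s : ℝ => f (a + s • d) - s * ⟪f' a, d⟫ - L / 2 * ‖d‖ ^ 2 * s ^ 2)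
      (⟪f' (a + t • d) - f' a, d⟫ - L * t * ‖d‖ ^ 2) t := by
    refine (((hasDerivAt_add_smul_of_hasGradientAt (hf (a + t • d))).sub
      ((hasDerivAt_id t).mul_const ⟪f' a, d⟫)).sub
      ((hasDerivAt_pow 2 t).const_mul (L / 2 * ‖d‖ ^ 2))).congr_deriv ?_
    rw [inner_sub_left]
    ring
  have hder_nonpos (t : ℝ) (ht : 0 ≤ t) :
      ⟪f' (a + t • d) - f' a, d⟫ - L * t * ‖d‖ ^ 2 ≤ 0 := by
    have hgrad : ‖f' (a + t • d) - f' a‖ ≤ L * (t * ‖d‖) := by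
      simpa [norm_smul, abs_of_nonneg ht] using hlip (a + t • d)
    nlinarith [real_inner_le_norm (f' (a + t • d) - f' a) d,
      mul_le_mul_of_nonneg_right hgrad (norm_nonneg d)]
  have hanti := antitoneOn_of_deriv_nonpos (convex_Icc (0 : ℝ) 1)
    (fun t _ => (hder t).continuousAt.continuousWithinAt)
    (fun t _ => (hder t).differentiableAt.differentiableWithinAt)
    (fun t ht => (hder t).deriv.trans_le (hder_nonpos t (interior_subset ht).1))
  have hends := hanti (left_mem_Icc.2 zero_le_one) (right_mem_Icc.2 zero_le_one) zero_le_one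
  simp only [hd, one_smul, zero_smul, add_zero, add_sub_cancel] at hends
  linarith

lemma hasGradientAt_inner_add_half_mul_norm_sub_sq (c u a : H) (L : ℝ) :
    HasGradientAt (fun z : H => ⟪c, z⟫ + L / 2 * ‖z - u‖ ^ 2) (c + L • (a - u)) a := by
  rw [hasGradientAt_iff_hasFDerivAt]
  have hsq := ((hasFDerivAt_id a).sub_const u).norm_sq.const_mul (L / 2)
  refine ((innerSL ℝ c).hasFDerivAt.add hsq).congr_fderiv ?_
  ext z
  simp only [id_eq, map_sub, ContinuousLinearMap.comp_id, add_apply, coe_innerSL_apply, smul_apply,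
    sub_apply, nsmul_eq_mul, Nat.cast_ofNat, smul_eq_mul, map_add, map_smul,
    InnerProductSpace.toDual_apply_apply, add_right_inj]
  ring

end Gradient

lemma ConvexSubgradAt.conjE_eq {g : H → ℝ} {x y : H} (h : ConvexSubgradAt g y x) :
    conjE g y = ((⟪x, y⟫ - g x : ℝ) : EReal) := by
  refine le_antisymm (iSup_le fun z => EReal.coe_le_coe_iff.2 ?_)
    (le_iSup (fun z : H => ((⟪z, y⟫ - g z : ℝ) : EReal)) x)
  have hz := h z
  rw [inner_sub_right, real_inner_comm z, real_inner_comm x] at hz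
  linarith

lemma ConvexSubgradAt.norm_le {g : H → ℝ} {x y : H} {M : ℝ} (h : ConvexSubgradAt g y x)
    (hM : ∀ z ∈ closedBall x 1, |g z| ≤ M) : ‖y‖ ≤ 2 * M := by
  have hx := hM x (mem_closedBall_self zero_le_one)
  rcases eq_or_ne y 0 with rfl | hy
  · linarith [abs_nonneg (g x), norm_zero (E := H)]
  have hunit : ‖‖y‖⁻¹ • y‖ = 1 := norm_smul_inv_norm hy
  have hz := hM (x + ‖y‖⁻¹ • y) (by simp [dist_eq_norm, hunit])
  have hsub := h (x + ‖y‖⁻¹ • y)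
  rw [add_sub_cancel_left, real_inner_smul_right, real_inner_self_eq_norm_sq, sq,
    inv_mul_cancel_left₀ (norm_ne_zero_iff.2 hy)] at hsub
  linarith [neg_le_of_abs_le hx, le_of_abs_le hz]

lemma ConvexSubgradAt.isBounded_of_isBounded [ProperSpace H] {ι : Type*} {g : H → ℝ}
    {x y : ι → H} (hg : Continuous g) (hx : IsBounded (range x))
    (h : ∀ i, ConvexSubgradAt g (y i) (x i)) : IsBounded (range y) := by
  obtain ⟨R, hR⟩ := hx.exists_norm_le
  obtain ⟨M, hM⟩ := (isCompact_closedBall (0 : H) (R + 1)).exists_bound_of_continuousOn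
    hg.continuousOn
  refine isBounded_iff_forall_norm_le.2 ⟨2 * M, forall_mem_range.2 fun i => ?_⟩
  refine (h i).norm_le fun z hz => hM z (mem_closedBall_zero_iff.2 ?_)
  have := norm_le_norm_add_norm_sub' z (x i)
  linarith [hR _ (mem_range_self i), mem_closedBall_iff_norm.1 hz]

lemma ConvexSubgradAt.of_tendsto {ι : Type*} {l : Filter ι} [NeBot l] {g : H → ℝ}
    {x y : ι → H} {x₀ y₀ : H} (hg : ContinuousAt g x₀)
    (h : ∀ᶠ i in l, ConvexSubgradAt g (y i) (x i))
    (hx : Tendsto x l (𝓝 x₀)) (hy : Tendsto y l (𝓝 y₀)) : ConvexSubgradAt g y₀ x₀ :=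
  fun z => le_of_tendsto ((hg.tendsto.comp hx).add (hy.inner (hx.const_sub z)))
    (h.mono fun _ hi => hi z)

namespace ConvexSubgradAtE

variable {P : H → EReal} {v a : H}

lemma ne_top (h : ConvexSubgradAtE P v a) {z : H} (hz : P z ≠ ⊤) : P a ≠ ⊤ := by
  intro ha
  have hle := h z
  rw [ha, EReal.top_add_coe, top_le_iff] at hle
  exact hz hle

lemma toReal_add_inner_le (h : ConvexSubgradAtE P v a) (hbot : ∀ z, P z ≠ ⊥) {z : H}
    (hz : P z ≠ ⊤) : (P a).toReal + ⟪v, z - a⟫ ≤ (P z).toReal := by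
  have hle := h z
  rwa [← EReal.coe_toReal (h.ne_top hz) (hbot a), ← EReal.coe_toReal hz (hbot z),
    ← EReal.coe_add, EReal.coe_le_coe_iff] at hle

variable {ι : Type*} {l : Filter ι} {x y : ι → H} {x₀ y₀ : H}

lemma of_tendsto [NeBot l] (hP : LowerSemicontinuousAt P x₀)
    (h : ∀ᶠ i in l, ConvexSubgradAtE P (y i) (x i))
    (hx : Tendsto x l (𝓝 x₀)) (hy : Tendsto y l (𝓝 y₀)) : ConvexSubgradAtE P y₀ x₀ := by
  intro z
  rw [← EReal.le_sub_iff_add_le (by simp) (by simp)]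
  refine EReal.ge_of_forall_gt_iff_ge.1 fun s hs => ?_
  rw [EReal.le_sub_iff_add_le (by simp) (by simp), ← EReal.coe_add]
  refine le_of_tendsto ((continuous_coe_real_ereal.tendsto _).comp
    ((hy.inner (hx.const_sub z)).const_add s)) ?_
  filter_upwards [h, hx.eventually (hP s hs)] with i hi hsi
  rw [Function.comp_apply, EReal.coe_add]
  exact (add_le_add_left hsi.le _).trans (hi z)

lemma tendsto_apply (hP : LowerSemicontinuousAt P x₀)
    (h : ∀ᶠ i in l, ConvexSubgradAtE P (y i) (x i))
    (hx : Tendsto x l (𝓝 x₀)) (hy : Tendsto y l (𝓝 y₀)) :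
    Tendsto (fun i => P (x i)) l (𝓝 (P x₀)) := by
  have hupper : Tendsto (fun i => P x₀ - (⟪y i, x₀ - x i⟫ : ℝ)) l (𝓝 (P x₀)) := by
    have hinner : Tendsto (fun i => ((-⟪y i, x₀ - x i⟫ : ℝ) : EReal)) l (𝓝 0) := by
      refine (continuous_coe_real_ereal.tendsto' 0 0 EReal.coe_zero).comp ?_
      simpa using (hy.inner (𝕜 := ℝ) (hx.const_sub x₀)).neg
    simpa [Function.comp_def, sub_eq_add_neg] using
      (EReal.continuousAt_add (p := (P x₀, 0)) (by simp) (by simp)).tendsto.comp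
        (tendsto_const_nhds.prodMk_nhds hinner)
  refine tendsto_order.2 ⟨fun s hs => hx.eventually (hP s hs), fun s hs => ?_⟩
  filter_upwards [h, hupper.eventually_lt_const hs] with i hi hsi
  exact ((EReal.le_sub_iff_add_le (by simp) (by simp)).2 (hi x₀)).trans_lt hsi

end ConvexSubgradAtE

lemma convexSubgradAtE_neg_of_forall_add_le [CompleteSpace H] {P : H → EReal} {g : H → ℝ}
    {g' a : H} (hP : ProperClosedConvexE P) (hg : HasGradientAt g g' a)
    (hmin : ∀ z, (g a : EReal) + P a ≤ g z + P z) : ConvexSubgradAtE P (-g') a := by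
  intro z
  rcases eq_or_ne (P z) ⊤ with hz | hz
  · exact hz ▸ le_top
  have ha : P a ≠ ⊤ := fun ha => (EReal.add_lt_top (EReal.coe_ne_top (g z)) hz).not_ge
    (by simpa [ha] using hmin z)
  lift P a to ℝ using ⟨ha, hP.1 a⟩ with p hp
  lift P z to ℝ using ⟨hz, hP.1 z⟩ with r hr
  have hslope : ∀ t ∈ Ioo (0 : ℝ) 1, p - r ≤ t⁻¹ • (g (a + t • (z - a)) - g a) := by
    intro t ht
    have hconv := hP.2.2.2 z a t ht
    have hle := (hmin (t • z + (1 - t) • a)).trans (add_le_add_right hconv _)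
    rw [← hp, ← hr, show t • z + (1 - t) • a = a + t • (z - a) by module] at hle
    norm_cast at hle
    rw [smul_eq_mul, ← div_eq_inv_mul, le_div_iff₀ ht.1]
    linarith
  have hlim : Tendsto (fun t : ℝ => t⁻¹ • (g (a + t • (z - a)) - g a)) (𝓝[>] 0)
      (𝓝 ⟪g', z - a⟫) := by
    simpa using (hasDerivAt_add_smul_of_hasGradientAt (d := z - a) (t := 0)
      (by simpa using hg)).tendsto_slope_zero_right
  have hle : p - r ≤ ⟪g', z - a⟫ :=
    ge_of_tendsto hlim (mem_of_superset (Ioo_mem_nhdsGT one_pos) hslope)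
  rw [inner_neg_left]
  norm_cast
  linarith

/-! ### Limiting subgradients and the Kurdyka–Łojasiewicz inequality -/

lemma FrechetSubgradAt.mem_limSubdiff {h : H → EReal} {v x : H} (hv : FrechetSubgradAt h v x) :
    v ∈ limSubdiff h x :=
  ⟨fun _ => x, fun _ => v, tendsto_const_nhds, tendsto_const_nhds, tendsto_const_nhds, fun _ => hv⟩

lemma frechetSubgradAt_of_sub_mul_norm_sq_le {h : H → EReal} {v x : H} (C : ℝ)
    (hC : ∀ y, h x + ((⟪v, y - x⟫ - C * ‖y - x‖ ^ 2 : ℝ) : EReal) ≤ h y) :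
    FrechetSubgradAt h v x := by
  intro ε hε
  have hsmall : ∀ᶠ y in 𝓝 x, C * ‖y - x‖ < ε :=
    (Continuous.tendsto' (by fun_prop) x 0 (by simp)).eventually_lt_const hε
  filter_upwards [nhdsWithin_le_nhds hsmall] with y hy
  refine le_trans (add_le_add_right (EReal.coe_le_coe_iff.2 ?_) _) (hC y)
  nlinarith [norm_nonneg (y - x)]

lemma KLExpAt.exists_eventually_sub_le_mul_norm_sq {ι : Type*} {l : Filter ι} {h : H → EReal}
    {z v : ι → H} {s : ι → ℝ} {z₀ : H} {s₀ : ℝ} (hKL : KLExpAt h (1 / 2) z₀) (hz₀ : h z₀ = s₀)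
    (hz : Tendsto z l (𝓝 z₀)) (hs : Tendsto s l (𝓝 s₀)) (hzs : ∀ i, h (z i) = s i)
    (hv : ∀ i, v i ∈ limSubdiff h (z i)) :
    ∃ c, 0 ≤ c ∧ ∀ᶠ i in l, s i - s₀ ≤ c * ‖v i‖ ^ 2 := by
  obtain ⟨c, hc, ε, hε, a, ha, hineq⟩ := hKL
  refine ⟨(c / 2) ^ 2, by positivity, ?_⟩
  filter_upwards [hz.eventually (closedBall_mem_nhds z₀ hε),
    hs.eventually_lt_const (lt_add_of_pos_right s₀ ha)] with i hzi hsi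
  rcases le_or_gt (s i) s₀ with hle | hlt
  · linarith [show 0 ≤ (c / 2) ^ 2 * ‖v i‖ ^ 2 by positivity]
  have hpos : 0 < s i - s₀ := sub_pos.2 hlt
  have hKLi := hineq (z i) (mem_closedBall_iff_norm.1 hzi) (by rw [hz₀, hzs]; exact_mod_cast hlt)
    (by rw [hz₀, hzs]; exact_mod_cast hsi) ⟨v i, hv i⟩
  have hdist : infDist 0 (limSubdiff h (z i)) ≤ ‖v i‖ := by
    simpa using infDist_le_dist_of_mem (x := 0) (hv i)
  have hsqrt : √(s i - s₀) ≤ c / 2 * ‖v i‖ := by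
    rw [hzs, hz₀, EReal.toReal_coe, EReal.toReal_coe, Real.rpow_neg hpos.le,
      ← Real.sqrt_eq_rpow] at hKLi
    calc √(s i - s₀) ≤ √(s i - s₀) * (c * (1 - 1 / 2) * (√(s i - s₀))⁻¹
            * infDist 0 (limSubdiff h (z i))) := le_mul_of_one_le_right (Real.sqrt_nonneg _) hKLi
      _ = c / 2 * infDist 0 (limSubdiff h (z i)) := by
        have := (Real.sqrt_pos.2 hpos).ne'
        field_simp
        norm_num
      _ ≤ c / 2 * ‖v i‖ := by gcongr
  rw [← mul_pow]
  exact (Real.sqrt_le_left (by positivity)).1 hsqrt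

/-! ### R-linear decay -/

/-- The sequence `a` is bounded above by a geometric sequence with ratio in `(0, 1)`. Only the upper
bound is recorded, since the notion is applied to nonnegative sequences. -/
def DecaysRLinearly (a : ℕ → ℝ) : Prop :=
  ∃ C > (0 : ℝ), ∃ q ∈ Ioo (0 : ℝ) 1, ∀ k, a k ≤ C * q ^ k

lemma decaysRLinearly_of_eventually_add_le_mul {a : ℕ → ℝ} {m : ℕ} {ρ : ℝ} (hm : 0 < m)
    (hρ : ρ ∈ Ioo (0 : ℝ) 1) (h : ∀ᶠ k in atTop, a (k + m) ≤ ρ * a k) : DecaysRLinearly a := by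
  obtain ⟨N, hN⟩ := eventually_atTop.1 h
  set q := ρ ^ (m : ℝ)⁻¹
  have hq0 : 0 < q := Real.rpow_pos_of_pos hρ.1 _
  have hqm : q ^ m = ρ := Real.rpow_inv_natCast_pow hρ.1.le hm.ne'
  obtain ⟨C, hC⟩ := ((finite_Iio (N + m)).image fun k => a k / q ^ k).bddAbove
  refine ⟨max C 1, by positivity, q, ⟨hq0, Real.rpow_lt_one hρ.1.le hρ.2 (by positivity)⟩,
    fun k => ?_⟩
  induction k using Nat.strong_induction_on with
  | _ k ih =>
    rcases lt_or_ge k (N + m) with hk | hk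
    · rw [← div_le_iff₀ (by positivity)]
      exact (hC (mem_image_of_mem _ hk)).trans (le_max_left C 1)
    · obtain ⟨j, rfl⟩ := Nat.exists_eq_add_of_le' (Nat.le_of_add_left_le hk)
      calc a (j + m) ≤ ρ * a j := hN j (by lia)
        _ ≤ ρ * (max C 1 * q ^ j) := mul_le_mul_of_nonneg_left (ih j (by lia)) hρ.1.le
        _ = max C 1 * q ^ (j + m) := by rw [pow_add, hqm]; ring

namespace DecaysRLinearly

variable {a b : ℕ → ℝ}

lemma of_mul_sq_le {D : ℝ} (hD : 0 < D) (ha : DecaysRLinearly a) (h : ∀ k, D * b k ^ 2 ≤ a k) :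
    DecaysRLinearly b := by
  obtain ⟨C, hC, q, hq, hle⟩ := ha
  refine ⟨√(C / D), by positivity, √q, ⟨Real.sqrt_pos.2 hq.1,
    (Real.sqrt_lt' one_pos).2 (by simpa using hq.2)⟩, fun k => ?_⟩
  refine le_of_abs_le (abs_le_of_sq_le_sq ?_ (by positivity))
  rw [mul_pow, Real.sq_sqrt (by positivity), pow_right_comm, Real.sq_sqrt hq.1.le,
    div_mul_eq_mul_div, le_div_iff₀' hD]
  exact (h k).trans (hle k)

lemma of_succ (h : DecaysRLinearly fun k => a (k + 1)) : DecaysRLinearly a := by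
  obtain ⟨C, hC, q, hq, hle⟩ := h
  have hq0 := hq.1
  refine ⟨max (a 0) (C / q), by positivity, q, hq, fun k => ?_⟩
  cases k with
  | zero => simp
  | succ k =>
    calc a (k + 1) ≤ C * q ^ k := hle k
      _ = C / q * q ^ (k + 1) := by rw [pow_succ]; field_simp
      _ ≤ max (a 0) (C / q) * q ^ (k + 1) := by gcongr; exact le_max_right ..

lemma exists_common_rate (ha : DecaysRLinearly a) (hb : DecaysRLinearly b) :
    ∃ C > (0 : ℝ), ∃ q ∈ Ioo (0 : ℝ) 1, (∀ k, a k ≤ C * q ^ k) ∧ ∀ k, b k ≤ C * q ^ k := by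
  obtain ⟨C₁, hC₁, q₁, hq₁, h₁⟩ := ha
  obtain ⟨C₂, _, q₂, hq₂, h₂⟩ := hb
  have hq₁0 := hq₁.1
  have hq₂0 := hq₂.1
  refine ⟨max C₁ C₂, lt_max_of_lt_left hC₁, max q₁ q₂,
    ⟨lt_max_of_lt_left hq₁0, max_lt hq₁.2 hq₂.2⟩, fun k => (h₁ k).trans ?_,
    fun k => (h₂ k).trans ?_⟩
  · gcongr <;> exact le_max_left ..
  · gcongr <;> exact le_max_right ..

lemma exists_tendsto {X : Type*} [PseudoMetricSpace X] [CompleteSpace X] {x : ℕ → X}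
    (h : DecaysRLinearly fun k => dist (x k) (x (k + 1))) :
    ∃ x₀, Tendsto x atTop (𝓝 x₀) ∧ DecaysRLinearly fun k => dist (x k) x₀ := by
  obtain ⟨C, hC, q, hq, hle⟩ := h
  obtain ⟨x₀, hx₀⟩ := cauchySeq_tendsto_of_complete (cauchySeq_of_le_geometric q C hq.2 hle)
  refine ⟨x₀, hx₀, C / (1 - q), div_pos hC (sub_pos.2 hq.2), q, hq, fun k => ?_⟩
  rw [div_mul_eq_mul_div]
  exact dist_le_of_le_geometric_of_tendsto q C hq.2 hle hx₀ k

end DecaysRLinearly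

/-! ### Ultrafilter limits -/

lemma exists_tendsto_ultrafilter_of_isBounded {ι X : Type*} [PseudoMetricSpace X] [ProperSpace X]
    {x : ι → X} (hx : IsBounded (range x)) (U : Ultrafilter ι) : ∃ x₀, Tendsto x U (𝓝 x₀) := by
  obtain ⟨x₀, -, hx₀⟩ := hx.isCompact_closure.ultrafilter_le_nhds (U.map x)
    (tendsto_principal.2 (.of_forall fun i => subset_closure (mem_range_self i)))
  exact ⟨x₀, hx₀⟩

lemma exists_eventually_le_mul_of_ultrafilter {ι : Type*} {l : Filter ι} {s t : ι → ℝ}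
    (ht : ∀ i, 0 ≤ t i)
    (h : ∀ U : Ultrafilter ι, ↑U ≤ l → ∃ c, ∀ᶠ i in (U : Filter ι), s i ≤ c * t i) :
    ∃ C > (0 : ℝ), ∀ᶠ i in l, s i ≤ C * t i := by
  by_contra! hfail
  -- The sets where the bound with constant `n + 1` fails decrease with `n`; no
  -- constant at all works along an ultrafilter that contains all of them.
  let F : ℕ → Filter ι := fun n => l ⊓ 𝓟 {i | (n + 1 : ℝ) * t i < s i}
  have hanti : Antitone F := fun m n hmn => by
    refine inf_le_inf_left l (principal_mono.2 fun i (hi : (n + 1) * t i < s i) => ?_)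
    change (m + 1) * t i < s i
    have := ht i
    exact hi.trans_le' (by gcongr)
  have hneBot (n : ℕ) : NeBot (F n) :=
    frequently_mem_iff_neBot.1 ((hfail (n + 1) (by positivity)).mono fun _ hi => hi)
  have : NeBot (⨅ n, F n) := iInf_neBot_of_directed' hanti.directed_ge hneBot
  let U := Ultrafilter.of (⨅ n, F n)
  have hU (n : ℕ) : ↑U ≤ F n := (Ultrafilter.of_le _).trans (iInf_le F n)
  obtain ⟨c, hc⟩ := h U ((hU 0).trans inf_le_left)
  obtain ⟨n, hn⟩ := exists_nat_ge c
  obtain ⟨i, hci, hni : (n + 1) * t i < s i⟩ :=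
    (hc.and (hU n (mem_inf_of_right (mem_principal_self _)))).exists
  exact hni.not_ge (hci.trans (mul_le_mul_of_nonneg_right (by linarith) (ht i)))

/-! ### The potential function -/

section Triple

variable {E : Type*} [NormedAddCommGroup E]

/-- Triples in `E` with the Euclidean product structure; `Trip n` is the case `E = Eucl n`. -/
abbrev Triple (E : Type*) := WithLp 2 (E × WithLp 2 (E × E))

/-- The element of `Triple E` with the given components; `mkTrip` is the case `E = Eucl n`. -/
def triple (a b c : E) : Triple E := WithLp.toLp 2 (a, WithLp.toLp 2 (b, c))

lemma triple_sub (a b c a' b' c' : E) :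
    triple a b c - triple a' b' c' = triple (a - a') (b - b') (c - c') := rfl

lemma norm_triple_sq (a b c : E) : ‖triple a b c‖ ^ 2 = ‖a‖ ^ 2 + (‖b‖ ^ 2 + ‖c‖ ^ 2) := by
  rw [WithLp.prod_norm_sq_eq_of_L2, WithLp.prod_norm_sq_eq_of_L2]
  rfl

lemma tendsto_triple {ι : Type*} {l : Filter ι} {a b c : ι → E} {a₀ b₀ c₀ : E}
    (ha : Tendsto a l (𝓝 a₀)) (hb : Tendsto b l (𝓝 b₀)) (hc : Tendsto c l (𝓝 c₀)) :
    Tendsto (fun i => triple (a i) (b i) (c i)) l (𝓝 (triple a₀ b₀ c₀)) :=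
  ((WithLp.prod_continuous_toLp 2 E _).tendsto _).comp
    (ha.prodMk_nhds (((WithLp.prod_continuous_toLp 2 E E).tendsto _).comp (hb.prodMk_nhds hc)))

lemma inner_triple (a b c a' b' c' : H) :
    ⟪triple a b c, triple a' b' c'⟫ = ⟪a, a'⟫ + (⟪b, b'⟫ + ⟪c, c'⟫) := by
  rw [WithLp.prod_inner_apply, WithLp.prod_inner_apply]
  rfl

end Triple

/-- The potential as a function of a triple; `potE3` is the case `H = Eucl n`. -/
def potTriple (f : H → ℝ) (P₁ : H → EReal) (P₂ : H → ℝ) (L : ℝ) (p : Triple H) : EReal :=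
  potE f P₁ P₂ L p.fst p.snd.fst p.snd.snd

/-- The real value of the potential at `(a, y, b)` for `y ∈ ∂P₂(b)`: the conjugate `P₂*(y)` is
replaced by `⟪b, y⟫ - P₂ b`, to which it is then equal, and `P₁ a` by its real part. -/
def potVal (f : H → ℝ) (P₁ : H → EReal) (P₂ : H → ℝ) (L : ℝ) (a y b : H) : ℝ :=
  f a + (P₁ a).toReal - ⟪a, y⟫ + (⟪b, y⟫ - P₂ b) + L / 2 * ‖a - b‖ ^ 2

section Potential

variable {f : H → ℝ} {P₁ : H → EReal} {P₂ : H → ℝ} {L : ℝ} {a b g v y : H}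

lemma potE_eq_potVal (htop : P₁ a ≠ ⊤) (hbot : P₁ a ≠ ⊥) (hy : ConvexSubgradAt P₂ y b) :
    potE f P₁ P₂ L a y b = potVal f P₁ P₂ L a y b := by
  unfold potE potVal
  rw [hy.conjE_eq]
  nth_rw 1 [← EReal.coe_toReal htop hbot]
  norm_cast

lemma ConvexSubgradAtE.coe_le_potE (hv : ConvexSubgradAtE P₁ v a) (htop : P₁ a ≠ ⊤)
    (hbot : P₁ a ≠ ⊥) (b z y w : H) :
    ((f z + ((P₁ a).toReal + ⟪v, z - a⟫) - ⟪z, y⟫ + (⟪b, y⟫ - P₂ b) + L / 2 * ‖z - w‖ ^ 2 : ℝ) :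
      EReal) ≤ potE f P₁ P₂ L z y w := by
  have hP₁ := hv z
  rw [← EReal.coe_toReal htop hbot, ← EReal.coe_add] at hP₁
  have hconj : ((⟪b, y⟫ - P₂ b : ℝ) : EReal) ≤ conjE P₂ y :=
    le_iSup (fun x : H => ((⟪x, y⟫ - P₂ x : ℝ) : EReal)) b
  rw [EReal.coe_add, EReal.coe_add _ (⟪b, y⟫ - P₂ b), EReal.coe_sub, EReal.coe_add (f z)]
  exact add_le_add_left (add_le_add (EReal.sub_le_sub (add_le_add_right hP₁ _) le_rfl) hconj) _

lemma frechetSubgradAt_potTriple (hL : 0 ≤ L) (hg : ConvexSubgradAt f g a)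
    (hv : ConvexSubgradAtE P₁ v a) (htop : P₁ a ≠ ⊤) (hbot : P₁ a ≠ ⊥)
    (hy : ConvexSubgradAt P₂ y b) :
    FrechetSubgradAt (potTriple f P₁ P₂ L)
      (triple (g + v - y + L • (a - b)) (b - a) (-(L • (a - b)))) (triple a y b) := by
  -- All terms of the potential are jointly convex except `-⟪x, y⟫`, which differs from its
  -- linearization by at most half the squared distance.
  refine frechetSubgradAt_of_sub_mul_norm_sq_le (1 / 2) fun q => ?_
  obtain ⟨z, y', w, rfl⟩ : ∃ z y' w, q = triple z y' w := ⟨q.fst, q.snd.fst, q.snd.snd, rfl⟩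
  refine le_trans ?_ (hv.coe_le_potE htop hbot b z y' w)
  change potE f P₁ P₂ L a y b + _ ≤ _
  rw [potE_eq_potVal htop hbot hy, ← EReal.coe_add, EReal.coe_le_coe_iff, triple_sub, inner_triple,
    norm_triple_sq, potVal]
  have hfz := hg z
  have hquad : L / 2 * ‖a - b‖ ^ 2 + L * ⟪a - b, (z - a) - (w - b)⟫ ≤ L / 2 * ‖z - w‖ ^ 2 := by
    rw [show z - w = (a - b) + ((z - a) - (w - b)) by abel, norm_add_sq_real]
    linarith [show 0 ≤ L / 2 * ‖(z - a) - (w - b)‖ ^ 2 by positivity]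
  have hbil : ⟪z - a, y' - y⟫ ≤ 1 / 2 * (‖z - a‖ ^ 2 + (‖y' - y‖ ^ 2 + ‖w - b‖ ^ 2)) := by
    nlinarith [real_inner_le_norm (z - a) (y' - y), sq_nonneg (‖z - a‖ - ‖y' - y‖),
      sq_nonneg ‖w - b‖]
  simp only [inner_sub_left, inner_sub_right, inner_add_left, inner_neg_left, real_inner_smul_left]
    at hfz hquad hbil ⊢
  rw [real_inner_comm a y, real_inner_comm z y]
  linarith

lemma le_potVal (hy : ConvexSubgradAt P₂ y b) :
    f a + (P₁ a).toReal - P₂ a + L / 2 * ‖a - b‖ ^ 2 ≤ potVal f P₁ P₂ L a y b := by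
  have hP₂ := hy a
  rw [inner_sub_right, real_inner_comm a, real_inner_comm b] at hP₂
  unfold potVal
  linarith

lemma potVal_le_of_prox {u : H} (hbot : ∀ z, P₁ z ≠ ⊥) (hb : P₁ b ≠ ⊤) (hg : ConvexSubgradAt f g u)
    (hfa : f a ≤ f u + ⟪g, a - u⟫ + L / 2 * ‖a - u‖ ^ 2)
    (hv : ConvexSubgradAtE P₁ (y - g - L • (a - u)) a) :
    potVal f P₁ P₂ L a y b ≤ f b + (P₁ b).toReal - P₂ b + L / 2 * ‖b - u‖ ^ 2 := by
  have hfb := hg b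
  have hP₁ := hv.toReal_add_inner_le hbot hb
  have hsq : L / 2 * ‖b - u‖ ^ 2
      = L / 2 * ‖b - a‖ ^ 2 + L * ⟪a - u, b - a⟫ + L / 2 * ‖a - u‖ ^ 2 := by
    rw [← sub_add_sub_cancel b a u, norm_add_sq_real, real_inner_comm]
    ring
  rw [potVal, norm_sub_rev a b]
  simp only [inner_sub_left, inner_sub_right, real_inner_smul_left] at *
  simp only [real_inner_comm y] at *
  linarith

lemma norm_sq_triple_le {g' u : H} {r : ℝ} (hL : 0 ≤ L) (hg : ‖g' - g‖ ≤ L * ‖a - u‖)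
    (hu : ‖u - b‖ ≤ r) :
    ‖triple (g' + (y - g - L • (a - u)) - y + L • (a - b)) (b - a) (-(L • (a - b)))‖ ^ 2
      ≤ (8 * L ^ 2 + 1) * (‖a - b‖ ^ 2 + r ^ 2) := by
  have hfst : ‖g' + (y - g - L • (a - u)) - y + L • (a - b)‖ ≤ L * (‖a - b‖ + 2 * r) :=
    calc _ = ‖(g' - g) + L • (u - b)‖ := by congr 1; module
      _ ≤ L * ‖a - u‖ + L * ‖u - b‖ := by
        refine norm_add_le_of_le hg ?_
        rw [norm_smul, Real.norm_of_nonneg hL]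
      _ ≤ L * (‖a - b‖ + r) + L * r := by
        have := norm_sub_le_norm_sub_add_norm_sub a b u
        rw [norm_sub_rev b u] at this
        gcongr
        linarith
      _ = _ := by ring
  have hfst_sq : ‖g' + (y - g - L • (a - u)) - y + L • (a - b)‖ ^ 2
      ≤ L ^ 2 * (2 * ‖a - b‖ ^ 2 + 8 * r ^ 2) := by
    refine (pow_le_pow_left₀ (norm_nonneg _) hfst 2).trans ?_
    rw [mul_pow]
    gcongr
    nlinarith [sq_nonneg (‖a - b‖ - 2 * r)]
  rw [norm_triple_sq, norm_neg, norm_smul, norm_sub_rev b a, Real.norm_of_nonneg hL]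
  nlinarith [sq_nonneg r, mul_nonneg (sq_nonneg L) (sq_nonneg ‖a - b‖)]

end Potential

/-! ### Runs of pDCA_e -/

/-- A run `x`, `ξ` of pDCA_e for `f + P₁ - P₂` with `f' = ∇f`, together with the standing
assumptions on the data. -/
structure PDCAeRun [CompleteSpace H] (f : H → ℝ) (f' : H → H) (P₁ : H → EReal) (P₂ : H → ℝ) (L : ℝ)
    (β : ℕ → ℝ) (x ξ : ℕ → H) : Prop where
  pos : 0 < L
  convexOn : ConvexOn ℝ univ f
  hasGradientAt : ∀ y, HasGradientAt f (f' y) y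
  norm_sub_le : ∀ y z, ‖f' y - f' z‖ ≤ L * ‖y - z‖
  properClosedConvex : ProperClosedConvexE P₁
  continuous_P₂ : Continuous P₂
  exists_abs_le : ∃ B < (1 : ℝ), ∀ k, |β k| ≤ B
  isPDCAe : IsPDCAe f' P₁ P₂ L β x ξ

namespace PDCAeRun

variable [CompleteSpace H] {f : H → ℝ} {f' : H → H} {P₁ : H → EReal} {P₂ : H → ℝ} {L : ℝ}
  {β : ℕ → ℝ} {x ξ : ℕ → H}

/-- The extrapolated point `u^k` at which `f` is linearized. -/
def extrapolation (_h : PDCAeRun f f' P₁ P₂ L β x ξ) (k : ℕ) : H := x k + β k • (x k - x (k - 1))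

/-- The length of the step that leads to `x k`; it is `0` for `k = 0`, in accordance with the
convention that the iterate with index `-1` is `x 0`. -/
def stepLength (_h : PDCAeRun f f' P₁ P₂ L β x ξ) (k : ℕ) : ℝ := ‖x k - x (k - 1)‖

/-- The real value of the objective `f + P₁ - P₂` at `x k`, which is finite. -/
def objective (_h : PDCAeRun f f' P₁ P₂ L β x ξ) (k : ℕ) : ℝ :=
  f (x k) + (P₁ (x k)).toReal - P₂ (x k)

/-- The real value of the potential after the `k`-th step, at `(x (k + 1), ξ (k + 1), x k)`. -/
def energy (_h : PDCAeRun f f' P₁ P₂ L β x ξ) (k : ℕ) : ℝ :=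
  potVal f P₁ P₂ L (x (k + 1)) (ξ (k + 1)) (x k)

/-- The subgradient of `P₁` at `x (k + 1)` given by the optimality condition of the `k`-th
subproblem. -/
def proxSubgrad (h : PDCAeRun f f' P₁ P₂ L β x ξ) (k : ℕ) : H :=
  ξ (k + 1) - f' (h.extrapolation k) - L • (x (k + 1) - h.extrapolation k)

lemma convexSubgradAt (h : PDCAeRun f f' P₁ P₂ L β x ξ) (k : ℕ) :
    ConvexSubgradAt P₂ (ξ (k + 1)) (x k) :=
  h.isPDCAe.2.1 k

lemma convexSubgradAtE_proxSubgrad (h : PDCAeRun f f' P₁ P₂ L β x ξ) (k : ℕ) :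
    ConvexSubgradAtE P₁ (h.proxSubgrad k) (x (k + 1)) := by
  convert convexSubgradAtE_neg_of_forall_add_le h.properClosedConvex
    (hasGradientAt_inner_add_half_mul_norm_sub_sq (f' (h.extrapolation k) - ξ (k + 1))
      (h.extrapolation k) (x (k + 1)) L) (h.isPDCAe.2.2 k) using 1
  rw [proxSubgrad]
  module

lemma apply_ne_top (h : PDCAeRun f f' P₁ P₂ L β x ξ) : ∀ k, P₁ (x k) ≠ ⊤
  | 0 => h.isPDCAe.1
  | k + 1 => (h.convexSubgradAtE_proxSubgrad k).ne_top h.isPDCAe.1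

lemma potE_eq_energy (h : PDCAeRun f f' P₁ P₂ L β x ξ) (k : ℕ) :
    potE f P₁ P₂ L (x (k + 1)) (ξ (k + 1)) (x k) = h.energy k :=
  potE_eq_potVal (h.apply_ne_top _) (h.properClosedConvex.1 _) (h.convexSubgradAt k)

lemma potE_eq_energy_pred (h : PDCAeRun f f' P₁ P₂ L β x ξ) {k : ℕ} (hk : 1 ≤ k) :
    potE f P₁ P₂ L (x k) (ξ k) (x (k - 1)) = h.energy (k - 1) := by
  simpa only [Nat.sub_add_cancel hk] using h.potE_eq_energy (k - 1)

lemma exists_norm_extrapolation_sub_le (h : PDCAeRun f f' P₁ P₂ L β x ξ) :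
    ∃ B, 0 ≤ B ∧ B < 1 ∧ ∀ k, ‖h.extrapolation k - x k‖ ≤ B * h.stepLength k := by
  obtain ⟨B, hB, hβ⟩ := h.exists_abs_le
  refine ⟨B, (abs_nonneg _).trans (hβ 0), hB, fun k => ?_⟩
  rw [extrapolation, add_sub_cancel_left, norm_smul]
  exact mul_le_mul_of_nonneg_right (hβ k) (norm_nonneg _)

lemma norm_extrapolation_sub_le (h : PDCAeRun f f' P₁ P₂ L β x ξ) (k : ℕ) :
    ‖h.extrapolation k - x k‖ ≤ h.stepLength k := by
  obtain ⟨B, -, hB, hle⟩ := h.exists_norm_extrapolation_sub_le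
  exact (hle k).trans (mul_le_of_le_one_left (norm_nonneg _) hB.le)

lemma objective_add_le_energy (h : PDCAeRun f f' P₁ P₂ L β x ξ) (k : ℕ) :
    h.objective (k + 1) + L / 2 * h.stepLength (k + 1) ^ 2 ≤ h.energy k :=
  le_potVal (h.convexSubgradAt k)

lemma objective_le_energy (h : PDCAeRun f f' P₁ P₂ L β x ξ) (k : ℕ) :
    h.objective (k + 1) ≤ h.energy k := by
  have := h.pos
  exact le_of_add_le_of_nonneg_left (h.objective_add_le_energy k) (by positivity)

lemma energy_le_objective_add (h : PDCAeRun f f' P₁ P₂ L β x ξ) (k : ℕ) :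
    h.energy k ≤ h.objective k + L / 2 * ‖x k - h.extrapolation k‖ ^ 2 :=
  potVal_le_of_prox h.properClosedConvex.1 (h.apply_ne_top k)
    (convexSubgradAt_of_hasGradientAt h.convexOn (h.hasGradientAt _))
    (le_add_inner_add_half_mul_norm_sq h.hasGradientAt (h.norm_sub_le · _) _)
    (h.convexSubgradAtE_proxSubgrad k)

lemma exists_energy_add_le (h : PDCAeRun f f' P₁ P₂ L β x ξ) :
    ∃ D > 0, ∀ k, h.energy (k + 1) + D * h.stepLength (k + 1) ^ 2 ≤ h.energy k := by
  obtain ⟨B, hB₀, hB₁, hB⟩ := h.exists_norm_extrapolation_sub_le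
  have hL := h.pos
  refine ⟨L / 2 * (1 - B ^ 2), mul_pos (half_pos hL) (sub_pos.2 (pow_lt_one₀ hB₀ hB₁ two_ne_zero)),
    fun k => ?_⟩
  have hle : L / 2 * ‖x (k + 1) - h.extrapolation (k + 1)‖ ^ 2
      ≤ L / 2 * (B * h.stepLength (k + 1)) ^ 2 := by
    rw [norm_sub_rev]
    gcongr
    exact hB (k + 1)
  linarith [h.energy_le_objective_add (k + 1), h.objective_add_le_energy k]

lemma antitone_energy (h : PDCAeRun f f' P₁ P₂ L β x ξ) : Antitone h.energy := by
  obtain ⟨D, hD, hdesc⟩ := h.exists_energy_add_le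
  exact antitone_nat_of_succ_le fun k => le_of_add_le_of_nonneg_left (hdesc k) (by positivity)

lemma isBounded_range_of_levelBounded (h : PDCAeRun f f' P₁ P₂ L β x ξ)
    (hlevel : ∀ γ : ℝ, IsBounded {y | (f y : EReal) + P₁ y - P₂ y ≤ γ}) :
    IsBounded (range x) := by
  refine ((hlevel (h.energy 0)).insert (x 0)).subset (range_subset_iff.2 fun k => ?_)
  cases k with
  | zero => exact mem_insert ..
  | succ k =>
    refine mem_insert_of_mem _ ?_
    rw [Set.mem_ofPred_eq, ← EReal.coe_toReal (h.apply_ne_top _) (h.properClosedConvex.1 _)]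
    exact_mod_cast (h.objective_le_energy k).trans (h.antitone_energy k.zero_le)

lemma continuous_f (h : PDCAeRun f f' P₁ P₂ L β x ξ) : Continuous f :=
  continuous_iff_continuousAt.2 fun y => (h.hasGradientAt y).continuousAt

lemma continuous_f' (h : PDCAeRun f f' P₁ P₂ L β x ξ) : Continuous f' :=
  (LipschitzWith.of_dist_le' (K := L) fun y z => by
    simpa only [dist_eq_norm] using h.norm_sub_le y z).continuous

lemma bddBelow_range_energy [ProperSpace H] (h : PDCAeRun f f' P₁ P₂ L β x ξ)
    (hx : IsBounded (range x)) : BddBelow (range h.energy) := by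
  have hcont : Continuous fun z =>
      f z + ((P₁ (x 1)).toReal + ⟪h.proxSubgrad 0, z - x 1⟫) - P₂ z := by
    have := h.continuous_f
    have := h.continuous_P₂
    fun_prop
  obtain ⟨m, hm⟩ := hx.isCompact_closure.bddBelow_image hcont.continuousOn
  refine ⟨m, forall_mem_range.2 fun k => ?_⟩
  have hmk := hm (mem_image_of_mem _ (subset_closure (mem_range_self (k + 1))))
  have hP₁ := (h.convexSubgradAtE_proxSubgrad 0).toReal_add_inner_le h.properClosedConvex.1
    (h.apply_ne_top (k + 1))
  have hobj := h.objective_le_energy k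
  rw [objective] at hobj
  linarith

section Limit

variable {ζ : ℝ}

lemma exists_tendsto_energy [ProperSpace H] (h : PDCAeRun f f' P₁ P₂ L β x ξ)
    (hx : IsBounded (range x)) : ∃ ζ, Tendsto h.energy atTop (𝓝 ζ) :=
  ⟨_, tendsto_atTop_ciInf h.antitone_energy (h.bddBelow_range_energy hx)⟩

lemma le_energy (h : PDCAeRun f f' P₁ P₂ L β x ξ) (hζ : Tendsto h.energy atTop (𝓝 ζ)) (k : ℕ) :
    ζ ≤ h.energy k :=
  h.antitone_energy.le_of_tendsto hζ k

lemma tendsto_stepLength (h : PDCAeRun f f' P₁ P₂ L β x ξ) (hζ : Tendsto h.energy atTop (𝓝 ζ)) :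
    Tendsto h.stepLength atTop (𝓝 0) := by
  obtain ⟨D, hD, hdesc⟩ := h.exists_energy_add_le
  have hdiff : Tendsto (fun k => (h.energy k - h.energy (k + 1)) / D) atTop (𝓝 0) := by
    simpa using (hζ.sub (hζ.comp (tendsto_add_atTop_nat 1))).div_const D
  have hsq : Tendsto (fun k => h.stepLength (k + 1) ^ 2) atTop (𝓝 0) := by
    refine squeeze_zero (fun k => sq_nonneg _) (fun k => ?_) hdiff
    rw [le_div_iff₀' hD]
    linarith [hdesc k]
  rw [← tendsto_add_atTop_iff_nat 1]
  simpa [stepLength] using hsq.sqrt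

variable {l : Filter ℕ} {xbar ybar : H}

lemma tendsto_of_tendsto_succ (h : PDCAeRun f f' P₁ P₂ L β x ξ)
    (hζ : Tendsto h.energy atTop (𝓝 ζ)) (hl : l ≤ atTop)
    (hx : Tendsto (fun k => x (k + 1)) l (𝓝 xbar)) : Tendsto x l (𝓝 xbar) := by
  have hstep : Tendsto (fun k => x (k + 1) - x k) l (𝓝 0) :=
    tendsto_zero_iff_norm_tendsto_zero.2
      ((((tendsto_add_atTop_iff_nat 1).2 (h.tendsto_stepLength hζ))).mono_left hl)
  simpa using hx.sub hstep

lemma tendsto_extrapolation (h : PDCAeRun f f' P₁ P₂ L β x ξ) (hζ : Tendsto h.energy atTop (𝓝 ζ))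
    (hl : l ≤ atTop) (hx : Tendsto x l (𝓝 xbar)) : Tendsto h.extrapolation l (𝓝 xbar) := by
  simpa using hx.add
    (squeeze_zero_norm h.norm_extrapolation_sub_le ((h.tendsto_stepLength hζ).mono_left hl))

lemma tendsto_proxSubgrad (h : PDCAeRun f f' P₁ P₂ L β x ξ) (hζ : Tendsto h.energy atTop (𝓝 ζ))
    (hl : l ≤ atTop) (hx : Tendsto (fun k => x (k + 1)) l (𝓝 xbar))
    (hξ : Tendsto (fun k => ξ (k + 1)) l (𝓝 ybar)) :
    Tendsto h.proxSubgrad l (𝓝 (ybar - f' xbar)) := by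
  have hu := h.tendsto_extrapolation hζ hl (h.tendsto_of_tendsto_succ hζ hl hx)
  have hlim := (hξ.sub ((h.continuous_f'.tendsto xbar).comp hu)).sub ((hx.sub hu).const_smul L)
  rw [sub_self, smul_zero, sub_zero] at hlim
  exact hlim

variable [NeBot l]

lemma convexSubgradAt_of_tendsto (h : PDCAeRun f f' P₁ P₂ L β x ξ)
    (hζ : Tendsto h.energy atTop (𝓝 ζ)) (hl : l ≤ atTop)
    (hx : Tendsto (fun k => x (k + 1)) l (𝓝 xbar))
    (hξ : Tendsto (fun k => ξ (k + 1)) l (𝓝 ybar)) : ConvexSubgradAt P₂ ybar xbar :=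
  .of_tendsto h.continuous_P₂.continuousAt (.of_forall h.convexSubgradAt)
    (h.tendsto_of_tendsto_succ hζ hl hx) hξ

lemma convexSubgradAtE_of_tendsto (h : PDCAeRun f f' P₁ P₂ L β x ξ)
    (hζ : Tendsto h.energy atTop (𝓝 ζ)) (hl : l ≤ atTop)
    (hx : Tendsto (fun k => x (k + 1)) l (𝓝 xbar))
    (hξ : Tendsto (fun k => ξ (k + 1)) l (𝓝 ybar)) :
    ConvexSubgradAtE P₁ (ybar - f' xbar) xbar :=
  .of_tendsto (h.properClosedConvex.2.2.1 xbar) (.of_forall h.convexSubgradAtE_proxSubgrad) hx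
    (h.tendsto_proxSubgrad hζ hl hx hξ)

lemma potVal_eq_of_tendsto (h : PDCAeRun f f' P₁ P₂ L β x ξ)
    (hζ : Tendsto h.energy atTop (𝓝 ζ)) (hl : l ≤ atTop)
    (hx : Tendsto (fun k => x (k + 1)) l (𝓝 xbar))
    (hξ : Tendsto (fun k => ξ (k + 1)) l (𝓝 ybar)) : potVal f P₁ P₂ L xbar ybar xbar = ζ := by
  have hx₀ := h.tendsto_of_tendsto_succ hζ hl hx
  have hP₁ : Tendsto (fun k => (P₁ (x (k + 1))).toReal) l (𝓝 (P₁ xbar).toReal) :=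
    (EReal.tendsto_toReal
      ((h.convexSubgradAtE_of_tendsto hζ hl hx hξ).ne_top (h.apply_ne_top 0))
      (h.properClosedConvex.1 xbar)).comp
      (ConvexSubgradAtE.tendsto_apply (h.properClosedConvex.2.2.1 xbar)
        (.of_forall h.convexSubgradAtE_proxSubgrad) hx (h.tendsto_proxSubgrad hζ hl hx hξ))
  refine tendsto_nhds_unique ?_ (hζ.mono_left hl)
  exact (((((h.continuous_f.tendsto xbar).comp hx).add hP₁).sub (hx.inner hξ)).add
    ((hx₀.inner hξ).sub ((h.continuous_P₂.tendsto xbar).comp hx₀))).add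
    (((hx.sub hx₀).norm.pow 2).const_mul (L / 2))

lemma exists_error_bound_of_tendsto (h : PDCAeRun f f' P₁ P₂ L β x ξ)
    (hKL : IsKLWithExp (potTriple f P₁ P₂ L) (1 / 2)) (hζ : Tendsto h.energy atTop (𝓝 ζ))
    (hl : l ≤ atTop) (hx : Tendsto (fun k => x (k + 1)) l (𝓝 xbar))
    (hξ : Tendsto (fun k => ξ (k + 1)) l (𝓝 ybar)) :
    ∃ c, ∀ᶠ k in l,
      h.energy k - ζ ≤ c * (h.stepLength (k + 1) ^ 2 + h.stepLength k ^ 2) := by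
  have hbot := h.properClosedConvex.1
  have hfsub (y : H) := convexSubgradAt_of_hasGradientAt h.convexOn (h.hasGradientAt y)
  have hP₁sub := h.convexSubgradAtE_of_tendsto hζ hl hx hξ
  have hP₂sub := h.convexSubgradAt_of_tendsto hζ hl hx hξ
  have htop := hP₁sub.ne_top (h.apply_ne_top 0)
  have hvalue : potTriple f P₁ P₂ L (triple xbar ybar xbar) = ζ :=
    (potE_eq_potVal htop (hbot xbar) hP₂sub).trans
      (congrArg _ (h.potVal_eq_of_tendsto hζ hl hx hξ))
  have hKL := hKL _ ⟨_, (frechetSubgradAt_potTriple h.pos.le (hfsub xbar) hP₁sub htop (hbot xbar)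
    hP₂sub).mem_limSubdiff⟩
  obtain ⟨c, hc, hle⟩ := hKL.exists_eventually_sub_le_mul_norm_sq hvalue
    (tendsto_triple hx hξ (h.tendsto_of_tendsto_succ hζ hl hx)) (hζ.mono_left hl) h.potE_eq_energy
    fun k => (frechetSubgradAt_potTriple h.pos.le (hfsub _) (h.convexSubgradAtE_proxSubgrad k)
      (h.apply_ne_top (k + 1)) (hbot _) (h.convexSubgradAt k)).mem_limSubdiff
  refine ⟨c * (8 * L ^ 2 + 1), hle.mono fun k hk => hk.trans ?_⟩
  rw [mul_assoc]
  exact mul_le_mul_of_nonneg_left (norm_sq_triple_le h.pos.le (h.norm_sub_le _ _)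
    (h.norm_extrapolation_sub_le k)) hc

lemma exists_tendsto_ultrafilter [ProperSpace H] (h : PDCAeRun f f' P₁ P₂ L β x ξ)
    (hx : IsBounded (range x)) (U : Ultrafilter ℕ) :
    ∃ xbar ybar, Tendsto (fun k => x (k + 1)) U (𝓝 xbar) ∧
      Tendsto (fun k => ξ (k + 1)) U (𝓝 ybar) := by
  obtain ⟨xbar, hxbar⟩ := exists_tendsto_ultrafilter_of_isBounded
    (hx.subset (range_comp_subset_range (· + 1) x)) U
  obtain ⟨ybar, hybar⟩ := exists_tendsto_ultrafilter_of_isBounded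
    (ConvexSubgradAt.isBounded_of_isBounded h.continuous_P₂ hx h.convexSubgradAt) U
  exact ⟨xbar, ybar, hxbar, hybar⟩

lemma exists_error_bound [ProperSpace H] (h : PDCAeRun f f' P₁ P₂ L β x ξ)
    (hx : IsBounded (range x)) (hKL : IsKLWithExp (potTriple f P₁ P₂ L) (1 / 2))
    (hζ : Tendsto h.energy atTop (𝓝 ζ)) :
    ∃ C > 0, ∀ᶠ k in atTop,
      h.energy k - ζ ≤ C * (h.stepLength (k + 1) ^ 2 + h.stepLength k ^ 2) := by
  refine exists_eventually_le_mul_of_ultrafilter (fun k => by positivity) fun U hU => ?_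
  obtain ⟨xbar, ybar, hxbar, hybar⟩ := h.exists_tendsto_ultrafilter hx U
  exact h.exists_error_bound_of_tendsto hKL hζ hU hxbar hybar

lemma exists_energy_sub_le [ProperSpace H] (h : PDCAeRun f f' P₁ P₂ L β x ξ)
    (hx : IsBounded (range x)) (hKL : IsKLWithExp (potTriple f P₁ P₂ L) (1 / 2))
    (hζ : Tendsto h.energy atTop (𝓝 ζ)) :
    ∃ C > 0, ∀ᶠ k in atTop, h.energy (k + 2) - ζ ≤ C * (h.energy k - h.energy (k + 2)) := by
  obtain ⟨D, hD, hdesc⟩ := h.exists_energy_add_le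
  obtain ⟨C, hC, herr⟩ := h.exists_error_bound hx hKL hζ
  refine ⟨C / D, by positivity, ((tendsto_add_atTop_nat 1).eventually herr).mono fun k hk => ?_⟩
  calc h.energy (k + 2) - ζ ≤ h.energy (k + 1) - ζ :=
        sub_le_sub_right (h.antitone_energy (k + 1).le_succ) ζ
    _ ≤ C * (h.stepLength (k + 2) ^ 2 + h.stepLength (k + 1) ^ 2) := hk
    _ = C / D * (D * h.stepLength (k + 2) ^ 2 + D * h.stepLength (k + 1) ^ 2) := by field_simp
    _ ≤ C / D * (h.energy k - h.energy (k + 2)) := by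
      gcongr
      linarith [hdesc k, hdesc (k + 1)]

lemma decaysRLinearly_energy_sub (h : PDCAeRun f f' P₁ P₂ L β x ξ) {C : ℝ} (hC : 0 < C)
    (hle : ∀ᶠ k in atTop, h.energy (k + 2) - ζ ≤ C * (h.energy k - h.energy (k + 2))) :
    DecaysRLinearly fun k => h.energy k - ζ := by
  refine decaysRLinearly_of_eventually_add_le_mul (ρ := C / (1 + C)) two_pos
    ⟨by positivity, (div_lt_one (by positivity)).2 (by linarith)⟩ (hle.mono fun k hk => ?_)
  rw [div_mul_eq_mul_div, le_div_iff₀ (by positivity)]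
  linarith

lemma exists_tendsto (h : PDCAeRun f f' P₁ P₂ L β x ξ) (hζ : Tendsto h.energy atTop (𝓝 ζ))
    (hdecay : DecaysRLinearly fun k => h.energy k - ζ) :
    ∃ xbar, Tendsto x atTop (𝓝 xbar) ∧ DecaysRLinearly fun k => ‖x k - xbar‖ := by
  obtain ⟨D, hD, hdesc⟩ := h.exists_energy_add_le
  have hsteps : DecaysRLinearly fun k => dist (x k) (x (k + 1)) := by
    refine hdecay.of_mul_sq_le hD fun k => ?_
    rw [dist_comm, dist_eq_norm]
    exact (le_sub_iff_add_le'.2 (hdesc k)).trans (sub_le_sub_left (h.le_energy hζ (k + 1)) _)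
  simpa only [dist_eq_norm] using hsteps.exists_tendsto

lemma exists_stationary [ProperSpace H] (h : PDCAeRun f f' P₁ P₂ L β x ξ)
    (hζ : Tendsto h.energy atTop (𝓝 ζ)) (hx : Tendsto x atTop (𝓝 xbar)) :
    ∃ v₁ v₂, ConvexSubgradAtE P₁ v₁ xbar ∧ ConvexSubgradAt P₂ v₂ xbar ∧ f' xbar + v₁ - v₂ = 0 := by
  let U := hyperfilter ℕ
  have hU : ↑U ≤ (atTop : Filter ℕ) := Nat.hyperfilter_le_atTop
  obtain ⟨_, ybar, -, hybar⟩ := h.exists_tendsto_ultrafilter (isBounded_range_of_tendsto x hx) U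
  have hxU : Tendsto (fun k => x (k + 1)) U (𝓝 xbar) :=
    ((tendsto_add_atTop_iff_nat 1).2 hx).mono_left hU
  exact ⟨ybar - f' xbar, ybar, h.convexSubgradAtE_of_tendsto hζ hU hxU hybar,
    h.convexSubgradAt_of_tendsto hζ hU hxU hybar, by abel⟩

lemma tendsto_potE (h : PDCAeRun f f' P₁ P₂ L β x ξ) (hζ : Tendsto h.energy atTop (𝓝 ζ)) :
    Tendsto (fun k => potE f P₁ P₂ L (x k) (ξ k) (x (k - 1))) atTop (𝓝 (ζ : EReal)) := by
  rw [← tendsto_add_atTop_iff_nat 1]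
  exact (EReal.tendsto_coe.2 hζ).congr fun k => (h.potE_eq_energy k).symm

lemma potE_sub_le (h : PDCAeRun f f' P₁ P₂ L β x ξ) {C : ℝ}
    (hle : ∀ᶠ k in atTop, h.energy (k + 2) - ζ ≤ C * (h.energy k - h.energy (k + 2))) :
    ∀ᶠ k in atTop, potE f P₁ P₂ L (x (k + 1)) (ξ (k + 1)) (x k) - (ζ : EReal)
      ≤ (C : EReal) * (potE f P₁ P₂ L (x (k - 1)) (ξ (k - 1)) (x (k - 2))
        - potE f P₁ P₂ L (x (k + 1)) (ξ (k + 1)) (x k)) := by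
  rw [← map_add_atTop_eq_nat 2, eventually_map]
  filter_upwards [hle] with k hk
  rw [h.potE_eq_energy, show k + 2 - 1 = k + 1 from rfl, Nat.add_sub_cancel, h.potE_eq_energy]
  exact_mod_cast hk

end Limit
end PDCAeRun

theorem pDCAe_linear_convergence_general [ProperSpace H] (f : H → ℝ) (f' : H → H) (P₁ : H → EReal)
    (P₂ : H → ℝ) (L : ℝ) (β : ℕ → ℝ) (x ξ : ℕ → H) (h : PDCAeRun f f' P₁ P₂ L β x ξ)
    (hx : IsBounded (range x)) (hKL : IsKLWithExp (potTriple f P₁ P₂ L) (1 / 2)) :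
    ∃ ζ : ℝ, ∃ xbar : H,
      Tendsto (fun k : ℕ => potE f P₁ P₂ L (x k) (ξ k) (x (k - 1))) atTop (𝓝 (ζ : EReal)) ∧
      (∃ v₁ v₂ : H, ConvexSubgradAtE P₁ v₁ xbar ∧ ConvexSubgradAt P₂ v₂ xbar ∧
        f' xbar + v₁ - v₂ = 0) ∧
      Tendsto x atTop (𝓝 xbar) ∧
      (∃ C > (0 : ℝ), ∃ q ∈ Ioo (0 : ℝ) 1,
        (∀ k : ℕ, 1 ≤ k → ∃ t : ℝ,
          potE f P₁ P₂ L (x k) (ξ k) (x (k - 1)) = (t : EReal) ∧ |t - ζ| ≤ C * q ^ k) ∧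
        (∀ k : ℕ, ‖x k - xbar‖ ≤ C * q ^ k)) ∧
      (∃ C' > (0 : ℝ), ∀ᶠ k : ℕ in atTop,
        potE f P₁ P₂ L (x (k + 1)) (ξ (k + 1)) (x k) - (ζ : EReal)
          ≤ (C' : EReal) *
            (potE f P₁ P₂ L (x (k - 1)) (ξ (k - 1)) (x (k - 2))
              - potE f P₁ P₂ L (x (k + 1)) (ξ (k + 1)) (x k))) := by
  obtain ⟨ζ, hζ⟩ := h.exists_tendsto_energy hx
  obtain ⟨C', hC', hcontr⟩ := h.exists_energy_sub_le hx hKL hζ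
  have hdecay := h.decaysRLinearly_energy_sub hC' hcontr
  obtain ⟨xbar, hxbar, hrate⟩ := h.exists_tendsto hζ hdecay
  obtain ⟨C, hC, q, hq, henergy, hiter⟩ :=
    (DecaysRLinearly.of_succ (a := fun k => h.energy (k - 1) - ζ) hdecay).exists_common_rate hrate
  refine ⟨ζ, xbar, h.tendsto_potE hζ, h.exists_stationary hζ hxbar, hxbar,
    ⟨C, hC, q, hq, fun k hk => ⟨h.energy (k - 1), h.potE_eq_energy_pred hk, ?_⟩, hiter⟩,
    C', hC', h.potE_sub_le hcontr⟩
  rw [abs_of_nonneg (sub_nonneg.2 (h.le_energy hζ _))]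
  exact henergy k

/-- Local linear convergence of pDCAe when the potential function `E` is a KL function with
exponent `1/2`: the potential values converge R-linearly to their limit `ζ` and the iterates
converge R-linearly to a stationary point of `F`. -/
theorem pDCAe_linear_convergence
    {n : ℕ} (f : Eucl n → ℝ) (f' : Eucl n → Eucl n) (P₁ : Eucl n → EReal)
    (P₂ : Eucl n → ℝ) (L : ℝ) (β : ℕ → ℝ) (x ξ : ℕ → Eucl n)
    (hL : 0 < L)
    (hfconv : ConvexOn ℝ Set.univ f)
    (hfgrad : ∀ y, HasGradientAt f (f' y) y)
    (hflip : ∀ y z, ‖f' y - f' z‖ ≤ L * ‖y - z‖)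
    (hP₁ : ProperClosedConvexE P₁)
    (hP₂cont : Continuous P₂)
    (hP₂conv : ConvexOn ℝ Set.univ P₂)
    (hβ : ∀ k, β k ∈ Set.Ico (0:ℝ) 1)
    (hβsup : ∃ B < (1:ℝ), ∀ k, β k ≤ B)
    (hlevel : ∀ γ : ℝ, IsBounded {y : Eucl n |
      ((f y : ℝ) : EReal) + P₁ y - ((P₂ y : ℝ) : EReal) ≤ (γ : EReal)})
    (hseq : IsPDCAe f' P₁ P₂ L β x ξ)
    (hKL : IsKLWithExp (potE3 f P₁ P₂ L) (1 / 2))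
    : ∃ ζ : ℝ, ∃ xbar : Eucl n,
      Tendsto (fun k : ℕ => potE f P₁ P₂ L (x k) (ξ k) (x (k - 1))) atTop (𝓝 (ζ : EReal)) ∧
      (∃ v₁ v₂ : Eucl n, ConvexSubgradAtE P₁ v₁ xbar ∧ ConvexSubgradAt P₂ v₂ xbar ∧
        f' xbar + v₁ - v₂ = 0) ∧
      Tendsto x atTop (𝓝 xbar) ∧
      (∃ C > (0:ℝ), ∃ q ∈ Set.Ioo (0:ℝ) 1,
        (∀ k : ℕ, 1 ≤ k → ∃ t : ℝ,
          potE f P₁ P₂ L (x k) (ξ k) (x (k - 1)) = (t : EReal) ∧ |t - ζ| ≤ C * q ^ k) ∧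
        (∀ k : ℕ, ‖x k - xbar‖ ≤ C * q ^ k)) ∧
      (∃ C' > (0:ℝ), ∀ᶠ k : ℕ in atTop,
        potE f P₁ P₂ L (x (k + 1)) (ξ (k + 1)) (x k) - (ζ : EReal)
          ≤ ((C' : ℝ) : EReal) *
            (potE f P₁ P₂ L (x (k - 1)) (ξ (k - 1)) (x (k - 2))
              - potE f P₁ P₂ L (x (k + 1)) (ξ (k + 1)) (x k))) := by
  obtain ⟨B, hB, hle⟩ := hβsup
  have h : PDCAeRun f f' P₁ P₂ L β x ξ := ⟨hL, hfconv, hfgrad, hflip, hP₁, hP₂cont,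
    ⟨B, hB, fun k => (abs_of_nonneg (hβ k).1).trans_le (hle k)⟩, hseq⟩
  exact pDCAe_linear_convergence_general f f' P₁ P₂ L β x ξ h
    (h.isBounded_range_of_levelBounded hlevel) hKL
end
end

section
/- Let Q₁: ℝⁿ → ℝ ∪ {∞} be proper and closed, Q₂: ℝᵐ → ℝ be convex with ∇Q₂ globally Lipschitz continuous with modulus ℓ, and A: ℝⁿ → ℝᵐ be linear. Define h(x) = Q₁(x) − Q₂(Ax) and H(x, y) = Q₁(x) − ⟨Ax, y⟩ + Q₂*(y). Then for every x ∈ dom Q₁ and every y with ∂Q₂*(y) ≠ ∅ (∂ the convex subdifferential), it holds that H(x, y) ≤ h(x) + (ℓ/2)·dist²(Ax, ∂Q₂*(y)); in particular, for every ũ ∈ ∂Q₂*(y), H(x, y) ≤ h(x) + (ℓ/2)‖ũ − Ax‖². -/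
/-!
For a differentiable convex function `g`, a point `u ∈ ∂g*(y)` satisfies `y = ∇g u` and
`g* y = ⟪u, y⟫ - g u`. Hence, for every `z`, the Fenchel–Young gap `g z + g* y - ⟪z, y⟫` is the
error `g z - g u - ⟪∇g u, z - u⟫` of the linearization of `g` at `u`, which is at most
`ℓ / 2 * ‖u - z‖ ^ 2` when `∇g` is `ℓ`-Lipschitz. With `g = Q₂` and `z = A x` this gap is
`H(x, y) - h(x)`. The bound is a closed condition on the number `‖u - z‖`, so it passes to the
infimum over `u`.
-/

open Filter Topology Set Metric Bornology
open scoped RealInnerProductSpace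

noncomputable section

variable {H : Type*} [NormedAddCommGroup H] [InnerProductSpace ℝ H]

lemma convexSubgradAt_iff_conjE_le {g : H → ℝ} {v x : H} :
    ConvexSubgradAt g v x ↔ conjE g v ≤ ((⟪x, v⟫ - g x : ℝ) : EReal) := by
  simp only [ConvexSubgradAt, conjE, iSup_le_iff, EReal.coe_le_coe_iff, inner_sub_right,
    real_inner_comm v]
  exact forall_congr' fun z => ⟨fun h => by linarith, fun h => by linarith⟩

/-- Since the subgradient `v` attains the conjugate, `g* v = ⟪u, v⟫ - g u`, testing `u ∈ ∂g*(y)`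
at `v` alone already yields `g* y ≤ ⟪u, y⟫ - g u`. -/
lemma ConvexSubgradAtE.convexSubgradAt {g : H → ℝ} {u v y : H}
    (hu : ConvexSubgradAtE (conjE g) u y) (hv : ConvexSubgradAt g v u) :
    ConvexSubgradAt g y u := by
  have htest : conjE g y + ((⟪u, v - y⟫ : ℝ) : EReal) ≤ ((⟪u, v⟫ - g u : ℝ) : EReal) :=
    (hu v).trans (convexSubgradAt_iff_conjE_le.1 hv)
  refine convexSubgradAt_iff_conjE_le.2 ?_
  calc conjE g y
      ≤ ((⟪u, v⟫ - g u : ℝ) : EReal) - ((⟪u, v - y⟫ : ℝ) : EReal) :=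
        EReal.le_sub_iff_add_le (.inl (EReal.coe_ne_bot _)) (.inl (EReal.coe_ne_top _)) |>.2 htest
    _ = ((⟪u, y⟫ - g u : ℝ) : EReal) := by
        rw [← EReal.coe_sub, inner_sub_right]
        congr 1
        ring

section Gradient

variable [CompleteSpace H] {g : H → ℝ} {g' : H → H} {v w u z y : H} {ℓ : ℝ}

lemma hasDerivAt_comp_lineMap {t : ℝ} (hg : HasGradientAt g w (AffineMap.lineMap u z t)) :
    HasDerivAt (fun s : ℝ => g (AffineMap.lineMap u z s)) ⟪w, z - u⟫ t :=
  hg.hasFDerivAt.comp_hasDerivAt t AffineMap.hasDerivAt_lineMap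

lemma convexSubgradAt_of_hasGradientAt_s7 (hconv : ConvexOn ℝ univ g) (hg : HasGradientAt g w u) :
    ConvexSubgradAt g w u := by
  intro z
  have hline : ConvexOn ℝ univ fun s : ℝ => g (AffineMap.lineMap u z s) :=
    hconv.comp_affineMap (AffineMap.lineMap u z)
  have hderiv : HasDerivAt (fun s : ℝ => g (AffineMap.lineMap u z s)) ⟪w, z - u⟫ 0 :=
    hasDerivAt_comp_lineMap (by simpa only [AffineMap.lineMap_apply_zero] using hg)
  have hslope := hline.le_slope_of_hasDerivAt (mem_univ 0) (mem_univ 1) one_pos hderiv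
  simp only [slope_def_field, AffineMap.lineMap_apply_zero, AffineMap.lineMap_apply_one, sub_zero,
    div_one] at hslope
  linarith

lemma ConvexSubgradAt.eq_of_hasGradientAt (hv : ConvexSubgradAt g v u)
    (hg : HasGradientAt g w u) : v = w := by
  have hmin : IsLocalMin (fun z => g z - ⟪v, z⟫) u := by
    refine Eventually.of_forall fun z => ?_
    have hz := hv z
    rw [inner_sub_right] at hz
    linarith
  have hzero := hmin.hasFDerivAt_eq_zero (hg.hasFDerivAt.sub (innerSL ℝ v).hasFDerivAt)
  refine ext_inner_right ℝ fun z => ?_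
  simpa [sub_eq_zero, eq_comm] using DFunLike.congr_fun hzero z

lemma le_add_inner_add_norm_sq_of_lipschitz_gradient (hg : ∀ u, HasGradientAt g (g' u) u)
    (hlip : ∀ u v, ‖g' u - g' v‖ ≤ ℓ * ‖u - v‖) (u z : H) :
    g z ≤ g u + ⟪g' u, z - u⟫ + ℓ / 2 * ‖z - u‖ ^ 2 := by
  let γ : ℝ → H := AffineMap.lineMap u z
  let B : ℝ → ℝ := fun t => g u + t * ⟪g' u, z - u⟫ + t ^ 2 * (ℓ / 2 * ‖z - u‖ ^ 2)
  have hγ (t : ℝ) : HasDerivAt (fun s => g (γ s)) ⟪g' (γ t), z - u⟫ t :=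
    hasDerivAt_comp_lineMap (hg _)
  have hB (t : ℝ) : HasDerivAt B (⟪g' u, z - u⟫ + t * (ℓ * ‖z - u‖ ^ 2)) t := by
    refine ((((hasDerivAt_id t).mul_const _).const_add (g u)).add
      ((hasDerivAt_pow 2 t).mul_const _)).congr_deriv ?_
    ring
  have hderiv_le : ∀ t ∈ Ico (0 : ℝ) 1,
      ⟪g' (γ t), z - u⟫ ≤ ⟪g' u, z - u⟫ + t * (ℓ * ‖z - u‖ ^ 2) := by
    intro t ht
    have hdist : ‖γ t - u‖ = t * ‖z - u‖ := by
      simp [γ, AffineMap.lineMap_apply, norm_smul, abs_of_nonneg ht.1]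
    calc ⟪g' (γ t), z - u⟫
        = ⟪g' u, z - u⟫ + ⟪g' (γ t) - g' u, z - u⟫ := by rw [inner_sub_left]; ring
      _ ≤ ⟪g' u, z - u⟫ + ‖g' (γ t) - g' u‖ * ‖z - u‖ := by gcongr; exact real_inner_le_norm _ _
      _ ≤ ⟪g' u, z - u⟫ + ℓ * ‖γ t - u‖ * ‖z - u‖ := by gcongr; exact hlip _ _
      _ = ⟪g' u, z - u⟫ + t * (ℓ * ‖z - u‖ ^ 2) := by rw [hdist]; ring
  have hle : g (γ 1) ≤ B 1 :=
    image_le_of_deriv_right_le_deriv_boundary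
      (fun t _ => (hγ t).continuousAt.continuousWithinAt) (fun t _ => (hγ t).hasDerivWithinAt)
      (by simp [γ, B]) (fun t _ => (hB t).continuousAt.continuousWithinAt)
      (fun t _ => (hB t).hasDerivWithinAt) hderiv_le (right_mem_Icc.2 zero_le_one)
  simpa [γ, B] using hle

lemma conjE_le_inner_sub_add_norm_sq (hconv : ConvexOn ℝ univ g)
    (hg : ∀ u, HasGradientAt g (g' u) u) (hlip : ∀ u v, ‖g' u - g' v‖ ≤ ℓ * ‖u - v‖)
    (hu : ConvexSubgradAtE (conjE g) u y) (z : H) :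
    conjE g y ≤ ((⟪z, y⟫ - g z + ℓ / 2 * ‖u - z‖ ^ 2 : ℝ) : EReal) := by
  have hy : ConvexSubgradAt g y u :=
    hu.convexSubgradAt (convexSubgradAt_of_hasGradientAt_s7 hconv (hg u))
  refine (convexSubgradAt_iff_conjE_le.1 hy).trans (EReal.coe_le_coe ?_)
  have hdescent := le_add_inner_add_norm_sq_of_lipschitz_gradient hg hlip u z
  rw [← hy.eq_of_hasGradientAt (hg u), inner_sub_right, real_inner_comm, real_inner_comm u,
    norm_sub_rev] at hdescent
  linarith

lemma conjE_le_inner_sub_add_infDist_sq (hconv : ConvexOn ℝ univ g)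
    (hg : ∀ u, HasGradientAt g (g' u) u) (hlip : ∀ u v, ‖g' u - g' v‖ ≤ ℓ * ‖u - v‖)
    (hne : {u | ConvexSubgradAtE (conjE g) u y}.Nonempty) (z : H) :
    conjE g y ≤
      ((⟪z, y⟫ - g z + ℓ / 2 * infDist z {u | ConvexSubgradAtE (conjE g) u y} ^ 2 : ℝ) :
        EReal) := by
  have hclosed :
      IsClosed {r : ℝ | conjE g y ≤ ((⟪z, y⟫ - g z + ℓ / 2 * r ^ 2 : ℝ) : EReal)} :=
    isClosed_le continuous_const (continuous_coe_real_ereal.comp (by fun_prop))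
  refine closure_minimal (forall_mem_image.2 fun u hu => ?_) hclosed
    ((isGLB_infDist hne).mem_closure (hne.image _))
  simpa only [mem_ofPred_eq, dist_eq_norm'] using
    conjE_le_inner_sub_add_norm_sq hconv hg hlip hu z

end Gradient

lemma ereal_sub_add_le_sub_add {a c : EReal} {p q r : ℝ} (h : c ≤ ((p - q + r : ℝ) : EReal)) :
    a - (p : EReal) + c ≤ a - (q : EReal) + (r : EReal) :=
  calc a - (p : EReal) + c ≤ a - (p : EReal) + ((p - q + r : ℝ) : EReal) := by gcongr
    _ = a - (q : EReal) + (r : EReal) := by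
      simp only [sub_eq_add_neg, add_assoc, ← EReal.coe_neg, ← EReal.coe_add]
      congr 2
      ring

theorem majorant_bound_by_dist_sq_general
    {X : Type*} [CompleteSpace H] (Q₁ : X → EReal) (Q₂ : H → ℝ) (q' : H → H) (A : X → H) (ℓ : ℝ)
    (hQ₂conv : ConvexOn ℝ Set.univ Q₂)
    (hQ₂grad : ∀ u, HasGradientAt Q₂ (q' u) u)
    (hQ₂lip : ∀ u v, ‖q' u - q' v‖ ≤ ℓ * ‖u - v‖)
    (x : X) (y : H) (hne : {u : H | ConvexSubgradAtE (conjE Q₂) u y}.Nonempty) :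
    (Q₁ x - ((⟪A x, y⟫ : ℝ) : EReal) + conjE Q₂ y
        ≤ (Q₁ x - ((Q₂ (A x) : ℝ) : EReal))
          + ((ℓ / 2 * infDist (A x) {u : H | ConvexSubgradAtE (conjE Q₂) u y} ^ 2 : ℝ) : EReal)) ∧
      ∀ u : H, ConvexSubgradAtE (conjE Q₂) u y →
        Q₁ x - ((⟪A x, y⟫ : ℝ) : EReal) + conjE Q₂ y
          ≤ (Q₁ x - ((Q₂ (A x) : ℝ) : EReal)) + ((ℓ / 2 * ‖u - A x‖ ^ 2 : ℝ) : EReal) :=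
  ⟨ereal_sub_add_le_sub_add <|
      conjE_le_inner_sub_add_infDist_sq hQ₂conv hQ₂grad hQ₂lip hne (A x),
    fun _ hu => ereal_sub_add_le_sub_add <|
      conjE_le_inner_sub_add_norm_sq hQ₂conv hQ₂grad hQ₂lip hu (A x)⟩

/-- The majorization inequality `H(x,y) ≤ h(x) + (ℓ/2)·dist²(Ax, ∂Q₂*(y))` relating
`h(x) = Q₁(x) - Q₂(Ax)` and `H(x,y) = Q₁(x) - ⟨Ax, y⟩ + Q₂*(y)`. -/
theorem majorant_bound_by_dist_sq
    {n m : ℕ} (Q₁ : Eucl n → EReal) (Q₂ : Eucl m → ℝ) (q' : Eucl m → Eucl m)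
    (A : Eucl n →ₗ[ℝ] Eucl m) (ℓ : ℝ)
    (hQ₁proper : (∀ x, Q₁ x ≠ ⊥) ∧ ∃ x, Q₁ x ≠ ⊤)
    (hQ₁closed : LowerSemicontinuous Q₁)
    (hQ₂conv : ConvexOn ℝ Set.univ Q₂)
    (hQ₂grad : ∀ u, HasGradientAt Q₂ (q' u) u)
    (hℓ : 0 ≤ ℓ)
    (hQ₂lip : ∀ u v, ‖q' u - q' v‖ ≤ ℓ * ‖u - v‖) :
    ∀ x : Eucl n, Q₁ x ≠ ⊤ →
      ∀ y : Eucl m, {u : Eucl m | ConvexSubgradAtE (conjE Q₂) u y}.Nonempty →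
        (Q₁ x - ((⟪A x, y⟫ : ℝ) : EReal) + conjE Q₂ y
            ≤ (Q₁ x - ((Q₂ (A x) : ℝ) : EReal))
              + ((ℓ / 2 * infDist (A x) {u : Eucl m | ConvexSubgradAtE (conjE Q₂) u y} ^ 2
                  : ℝ) : EReal)) ∧
          ∀ u : Eucl m, ConvexSubgradAtE (conjE Q₂) u y →
            Q₁ x - ((⟪A x, y⟫ : ℝ) : EReal) + conjE Q₂ y
              ≤ (Q₁ x - ((Q₂ (A x) : ℝ) : EReal)) + ((ℓ / 2 * ‖u - A x‖ ^ 2 : ℝ) : EReal) := by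
  intro x _ y hne
  exact majorant_bound_by_dist_sq_general Q₁ Q₂ q' A ℓ hQ₂conv hQ₂grad hQ₂lip x y hne
end
end
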